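/- arXiv:2004.05206 — 2 statements merged into one kernel-verified Lean document; each statement's English description precedes it below -/
import Mathlib

section
/- Let 0<p<1 and let (x_n)_{n∈ℕ} together with (x_n*)_{n∈ℕ} be a quasi-greedy basis of ℓ_p. Then ℓ_p embeds in ℓ_p via the basis and ℓ_p embeds in weak-ℓ_p via the basis; i.e., there is a constant C such that: (a) for every real sequence (a_n) with Σ_n |a_n|^p < ∞, the series Σ_n a_n x_n converges in ℓ_p and ‖Σ_n a_n x_n‖_p ≤ C·(Σ_n |a_n|^p)^{1/p}; and (b) for every f ∈ ℓ_p and every t>0, the number of indices n with |x_n*(f)| ≥ t is at most C^p·‖f‖_p^p / t^p. -/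
open scoped BigOperators

open scoped BigOperators

/-- For `0 < p < 1`, membership in `ℓ_p`: the sequence `(|f j|^p)_j` is summable. -/
def MemLpSeq (p : ℝ) (f : ℕ → ℝ) : Prop := Summable fun j => |f j| ^ p

/-- The `p`-norm `‖f‖_p = (∑_j |f j|^p)^(1/p)`. -/
noncomputable def pNorm (p : ℝ) (f : ℕ → ℝ) : ℝ := (∑' j, |f j| ^ p) ^ (1 / p)

/-- `A` is a greedy set for the coefficient sequence `coef`. -/
def GreedySet (coef : ℕ → ℝ) (A : Finset ℕ) : Prop :=
  ∀ n ∈ A, ∀ k ∉ A, |coef k| ≤ |coef n|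

/-- `(x_n)` together with bounded linear functionals `(x_n^*)` is a basis of `ℓ_p`. -/
structure IsLpBasis (p : ℝ) (x : ℕ → ℕ → ℝ) (xs : ℕ → (ℕ → ℝ) → ℝ) : Prop where
  mem : ∀ n, MemLpSeq p (x n)
  map_add : ∀ n f g, MemLpSeq p f → MemLpSeq p g → xs n (f + g) = xs n f + xs n g
  map_smul : ∀ n (c : ℝ) (f : ℕ → ℝ), MemLpSeq p f → xs n (fun j => c * f j) = c * xs n f
  bdd : ∃ b : ℝ, ∀ n f, MemLpSeq p f → |xs n f| ≤ b * pNorm p f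
  biorth : ∀ m n, xs m (x n) = if m = n then (1 : ℝ) else 0
  dense : ∀ f, MemLpSeq p f → ∀ ε > 0, ∃ (A : Finset ℕ) (c : ℕ → ℝ),
    pNorm p (fun j => f j - ∑ n ∈ A, c n * x n j) < ε
  norm_lb : ∃ c > 0, ∀ n, c ≤ pNorm p (x n)
  norm_ub : ∃ C : ℝ, ∀ n, pNorm p (x n) ≤ C

/-- The basis is quasi-greedy: greedy projections are uniformly bounded. -/
def QuasiGreedy (p : ℝ) (x : ℕ → ℕ → ℝ) (xs : ℕ → (ℕ → ℝ) → ℝ) : Prop :=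
  ∃ C ≥ (1 : ℝ), ∀ f, MemLpSeq p f → ∀ A : Finset ℕ,
    GreedySet (fun n => xs n f) A →
    pNorm p (fun j => ∑ n ∈ A, xs n f * x n j) ≤ C * pNorm p f

/-!
Part (a) is the `p`-convexity of `ℓ_p`. For (b), quasi-greediness first gives the truncation
quasi-greedy property: on a thin layer `s ≤ |x_n^*(f)| ≤ (1 + θ) s` the sum of the signs
`sign (x_n^*(f)) x_n` is controlled by the greedy projections of `f`, and the layers add up to a
geometric series. Next, since `x_n^*(x_n) = 1` with `x_n` and `x_n^*` bounded and `p < 1`, every `n`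
has a peak coordinate `j = J(n)` at which both `|x_n(j)|` and `|x_n^*(e_j)|` are bounded below.
If `|x_n^*(f)| ≥ t` for all `n ∈ s`, averaging `‖∑_{n ∈ U} x_n‖^p` over `U ⊆ s` shows that `J` takes
`O(‖f‖^p / t^p)` values on `s`. Truncation applied to the unit vector `e_j`, with signs aligned at
coordinate `j`, shows that each value is taken a bounded number of times.
-/

open Filter Topology
open scoped ENNReal lp

section PHomogeneous

variable {ι E : Type*} [AddCommGroup E] [Module ℝ E] {q : AddGroupSeminorm E}
  {x : ι → E} {xs : ι → E →ₗ[ℝ] ℝ} {p : ℝ}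

/-- Homogeneity of degree `p`. Throughout, a `p`-norm is represented by its `p`-th power `q`, which
is subadditive and satisfies `q (c • f) = |c| ^ p * q f`. -/
def IsPHomogeneous (p : ℝ) (q : AddGroupSeminorm E) : Prop :=
  ∀ (c : ℝ) (f : E), q (c • f) = |c| ^ p * q f

theorem IsPHomogeneous.map_sum_smul_le (hq : IsPHomogeneous p q) (A : Finset ι) (c : ι → ℝ) :
    q (∑ n ∈ A, c n • x n) ≤ ∑ n ∈ A, |c n| ^ p * q (x n) := by
  simpa only [hq _ _] using Finset.le_sum_of_subadditive q (map_zero q).le (map_add_le_add q) A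
    fun n => c n • x n

-- One step of binary expansion: `c = (𝟙_S + c') / 2` with `S = {1/2 ≤ c}`.
theorem IsPHomogeneous.exists_map_sum_mul_smul_le (hq : IsPHomogeneous p q) {A : Finset ι}
    {c : ι → ℝ} (hc : ∀ n ∈ A, c n ∈ Set.Icc (0 : ℝ) 1) (e : ι → ℝ) :
    ∃ S ⊆ A, ∃ c' : ι → ℝ, (∀ n ∈ A, c' n ∈ Set.Icc (0 : ℝ) 1) ∧
      2 ^ p * q (∑ n ∈ A, (c n * e n) • x n) ≤
        q (∑ n ∈ S, e n • x n) + q (∑ n ∈ A, (c' n * e n) • x n) := by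
  refine ⟨{n ∈ A | 1 / 2 ≤ c n}, Finset.filter_subset _ _,
    fun n => 2 * c n - if 1 / 2 ≤ c n then 1 else 0, fun n hn => ?_, ?_⟩
  · obtain ⟨h0, h1⟩ := hc n hn
    dsimp only
    split_ifs <;> constructor <;> linarith
  · have hdouble : (2 : ℝ) • ∑ n ∈ A, (c n * e n) • x n =
        ∑ n ∈ A with 1 / 2 ≤ c n, e n • x n +
          ∑ n ∈ A, ((2 * c n - if 1 / 2 ≤ c n then 1 else 0) * e n) • x n := by
      rw [Finset.sum_filter, ← Finset.sum_add_distrib, Finset.smul_sum]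
      refine Finset.sum_congr rfl fun n _ => ?_
      split_ifs <;> module
    calc 2 ^ p * q (∑ n ∈ A, (c n * e n) • x n)
        = q ((2 : ℝ) • ∑ n ∈ A, (c n * e n) • x n) := by rw [hq, abs_two]
      _ ≤ _ := hdouble ▸ map_add_le_add q _ _

/-- The truncation quasi-greedy property: the sum of the `x n` over a set on which the coefficients
of `f` are at least `t` in modulus, with arbitrary signs, is `O(‖f‖ / t)`. The constant `T` is the
one for `p`-th powers. -/
def IsTruncationQuasiGreedyWith (p T : ℝ) (q : AddGroupSeminorm E) (x : ι → E)
    (xs : ι → E →ₗ[ℝ] ℝ) : Prop :=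
  ∀ f, ∀ t > 0, ∀ (A : Finset ι) (e : ι → ℝ), (∀ n ∈ A, t ≤ |xs n f|) → (∀ n ∈ A, |e n| = 1) →
    t ^ p * q (∑ n ∈ A, e n • x n) ≤ T * q f

theorem coord_sum_smul [DecidableEq ι] (hx : ∀ m n, xs m (x n) = if m = n then 1 else 0) (m : ι)
    (A : Finset ι) (c : ι → ℝ) : xs m (∑ n ∈ A, c n • x n) = if m ∈ A then c m else 0 := by
  simp [map_sum, hx]

theorem setOf_le_abs_coord_subset [DecidableEq ι]
    (hx : ∀ m n, xs m (x n) = if m = n then 1 else 0) {f : E} {t : ℝ} {A : Finset ι} {c : ι → ℝ}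
    (hc : ∀ n, |xs n (f - ∑ k ∈ A, c k • x k)| < t) :
    {n | t ≤ |xs n f|} ⊆ A := by
  intro n hn
  by_contra hnA
  have hcoord := hc n
  rw [map_sub, coord_sum_smul hx, if_neg (mt Finset.mem_coe.2 hnA), sub_zero] at hcoord
  exact hcoord.not_ge hn

end PHomogeneous

section QuasiGreedy

variable {E : Type*} [AddCommGroup E] [Module ℝ E] {q : AddGroupSeminorm E}
  {x : ℕ → E} {xs : ℕ → E →ₗ[ℝ] ℝ} {p K : ℝ}

/-- A biorthogonal system whose greedy projections are bounded by `K`, where `K` bounds the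
`p`-th powers `q` of the `p`-norms. -/
structure IsQuasiGreedyWith (K : ℝ) (q : AddGroupSeminorm E) (x : ℕ → E)
    (xs : ℕ → E →ₗ[ℝ] ℝ) : Prop where
  biorth : ∀ m n, xs m (x n) = if m = n then 1 else 0
  map_greedy_le : ∀ f A, GreedySet (fun n => xs n f) A → q (∑ n ∈ A, xs n f • x n) ≤ K * q f

theorem greedySet_of_mem_iff {a : ℕ → ℝ} {s : ℝ} {A : Finset ℕ} (hA : ∀ n, n ∈ A ↔ s ≤ |a n|) :
    GreedySet a A := fun n hn k hk =>
  (not_le.1 (mt (hA k).2 hk)).le.trans ((hA n).1 hn)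

theorem abs_coe_sign {a : ℝ} (ha : a ≠ 0) : |(SignType.sign a : ℝ)| = 1 := by
  rcases ha.lt_or_gt with h | h <;> simp [h]

theorem exists_forall_abs_lt_pow_mul {ι : Type*} {a : ι → ℝ} {r t : ℝ} (hr : 1 < r) (ht : 0 < t)
    (hfin : {n | t ≤ |a n|}.Finite) : ∃ k : ℕ, ∀ n, |a n| < r ^ k * t := by
  obtain ⟨M, hM⟩ := (hfin.image fun n => |a n|).bddAbove
  obtain ⟨k, hk⟩ := pow_unbounded_of_one_lt (M / t) hr
  refine ⟨k, fun n => ?_⟩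
  rcases le_or_gt t |a n| with hn | hn
  · exact (hM (Set.mem_image_of_mem _ hn)).trans_lt ((div_lt_iff₀ ht).1 hk)
  · exact hn.trans_le (le_mul_of_one_le_left ht.le (one_le_pow₀ hr.le))

namespace IsQuasiGreedyWith

theorem map_sum_subset_le (h : IsQuasiGreedyWith K q x xs) {S A : Finset ℕ} (hSA : S ⊆ A)
    {e : ℕ → ℝ} (he : ∀ n ∈ A, |e n| = 1) :
    q (∑ n ∈ S, e n • x n) ≤ K * q (∑ n ∈ A, e n • x n) := by
  have hcoord (m : ℕ) := coord_sum_smul h.biorth m A e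
  have hS : GreedySet (fun n => xs n (∑ k ∈ A, e k • x k)) S := by
    intro n hn k _
    simp only [hcoord, if_pos (hSA hn), he n (hSA hn)]
    split_ifs with hk
    · exact (he k hk).le
    · simp
  have hproj := h.map_greedy_le _ S hS
  rwa [Finset.sum_congr rfl fun n hn => by rw [hcoord, if_pos (hSA hn)]] at hproj

theorem map_sum_change_signs_le (h : IsQuasiGreedyWith K q x xs) {A : Finset ℕ} {e d : ℕ → ℝ}
    (he : ∀ n ∈ A, |e n| = 1) (hd : ∀ n ∈ A, |d n| = 1) :
    q (∑ n ∈ A, e n • x n) ≤ 2 * K * q (∑ n ∈ A, d n • x n) := by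
  have hsplit : ∑ n ∈ A, e n • x n =
      ∑ n ∈ A with e n = d n, d n • x n - ∑ n ∈ A with ¬e n = d n, d n • x n := by
    rw [← Finset.sum_filter_add_sum_filter_not A (fun n => e n = d n), sub_eq_add_neg,
      ← Finset.sum_neg_distrib]
    congr 1 <;> refine Finset.sum_congr rfl fun n hn => ?_ <;>
      obtain ⟨hnA, hn⟩ := Finset.mem_filter.1 hn
    · rw [hn]
    · rw [(abs_eq_abs.1 ((he n hnA).trans (hd n hnA).symm)).resolve_left hn, neg_smul]
  calc q (∑ n ∈ A, e n • x n)
      ≤ q (∑ n ∈ A with e n = d n, d n • x n) + q (∑ n ∈ A with ¬e n = d n, d n • x n) :=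
        hsplit ▸ map_sub_le_add q _ _
    _ ≤ K * q (∑ n ∈ A, d n • x n) + K * q (∑ n ∈ A, d n • x n) :=
        add_le_add (h.map_sum_subset_le (Finset.filter_subset _ _) hd)
          (h.map_sum_subset_le (Finset.filter_subset _ _) hd)
    _ = 2 * K * q (∑ n ∈ A, d n • x n) := by ring

-- The binary step bounds the supremum `M` over all `c` by `(K * q (∑ e n • x n) + M) / 2 ^ p`,
-- and `M` is absorbed.
theorem map_sum_mul_smul_le (h : IsQuasiGreedyWith K q x xs) (hq : IsPHomogeneous p q) (hp : 0 < p)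
    {A : Finset ℕ} {c e : ℕ → ℝ} (he : ∀ n ∈ A, |e n| = 1)
    (hc : ∀ n ∈ A, c n ∈ Set.Icc (0 : ℝ) 1) :
    q (∑ n ∈ A, (c n * e n) • x n) ≤ K / (2 ^ p - 1) * q (∑ n ∈ A, e n • x n) := by
  have h2p : (1 : ℝ) < 2 ^ p := Real.one_lt_rpow one_lt_two hp
  set V : Set ℝ := (fun c : ℕ → ℝ => q (∑ n ∈ A, (c n * e n) • x n)) ''
    {c | ∀ n ∈ A, c n ∈ Set.Icc (0 : ℝ) 1}
  have hbdd : BddAbove V := by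
    refine ⟨∑ n ∈ A, q (x n), ?_⟩
    rintro _ ⟨c, hc, rfl⟩
    refine (hq.map_sum_smul_le A _).trans (Finset.sum_le_sum fun n hn => ?_)
    refine mul_le_of_le_one_left (apply_nonneg q _) ?_
    rw [abs_mul, he n hn, mul_one, abs_of_nonneg (hc n hn).1]
    exact Real.rpow_le_one (hc n hn).1 (hc n hn).2 hp.le
  have hstep : sSup V ≤ (K * q (∑ n ∈ A, e n • x n) + sSup V) / 2 ^ p := by
    refine csSup_le ⟨_, Set.mem_image_of_mem _ hc⟩ ?_
    rintro _ ⟨c, hc, rfl⟩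
    obtain ⟨S, hSA, c', hc', hle⟩ := hq.exists_map_sum_mul_smul_le (x := x) hc e
    rw [le_div_iff₀' (by positivity)]
    exact hle.trans (add_le_add (h.map_sum_subset_le hSA he)
      (le_csSup hbdd (Set.mem_image_of_mem _ hc')))
  calc q (∑ n ∈ A, (c n * e n) • x n) ≤ sSup V := le_csSup hbdd (Set.mem_image_of_mem _ hc)
    _ ≤ K * q (∑ n ∈ A, e n • x n) / (2 ^ p - 1) := by
      rw [le_div_iff₀' (by positivity)] at hstep
      rw [le_div_iff₀ (by linarith)]
      linarith
    _ = K / (2 ^ p - 1) * q (∑ n ∈ A, e n • x n) := by ring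

-- On `A` write `s * sign a = a - (θ * s) * c * sign a` with `c ∈ [0, 1]`; for small `θ` the
-- second term is absorbed.
theorem map_sum_sign_smul_le (h : IsQuasiGreedyWith K q x xs) (hq : IsPHomogeneous p q) (hp : 0 < p)
    {s θ : ℝ} (hs : 0 < s) (hθ : 0 < θ) (hθK : θ ^ p * (K / (2 ^ p - 1)) ≤ 1 / 2) {A : Finset ℕ}
    {a : ℕ → ℝ} (ha : ∀ n ∈ A, |a n| ∈ Set.Icc s ((1 + θ) * s)) :
    s ^ p * q (∑ n ∈ A, (SignType.sign (a n) : ℝ) • x n) ≤ 2 * q (∑ n ∈ A, a n • x n) := by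
  set G := q (∑ n ∈ A, (SignType.sign (a n) : ℝ) • x n)
  set c : ℕ → ℝ := fun n => (|a n| - s) / (θ * s)
  have hc_mem : ∀ n ∈ A, c n ∈ Set.Icc (0 : ℝ) 1 := fun n hn =>
    ⟨div_nonneg (sub_nonneg.2 (ha n hn).1) (by positivity),
      (div_le_one (by positivity)).2 (by linarith [(ha n hn).2])⟩
  have hsign : ∀ n ∈ A, |(SignType.sign (a n) : ℝ)| = 1 := fun n hn =>
    abs_coe_sign (abs_pos.1 (hs.trans_le (ha n hn).1))
  have hdecomp : s • ∑ n ∈ A, (SignType.sign (a n) : ℝ) • x n =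
      ∑ n ∈ A, a n • x n - (θ * s) • ∑ n ∈ A, (c n * SignType.sign (a n)) • x n := by
    simp only [Finset.smul_sum, smul_smul, ← Finset.sum_sub_distrib, ← sub_smul]
    refine Finset.sum_congr rfl fun n _ => ?_
    have hcancel : θ * s * c n = |a n| - s := mul_div_cancel₀ _ (by positivity)
    rw [← mul_assoc, hcancel, sub_mul, abs_mul_sign, sub_sub_cancel]
  have habsorb : (θ * s) ^ p * q (∑ n ∈ A, (c n * SignType.sign (a n)) • x n) ≤
      1 / 2 * (s ^ p * G) := by
    calc _ ≤ (θ * s) ^ p * (K / (2 ^ p - 1) * G) := by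
          gcongr
          exact h.map_sum_mul_smul_le hq hp hsign hc_mem
      _ = θ ^ p * (K / (2 ^ p - 1)) * (s ^ p * G) := by
          rw [Real.mul_rpow hθ.le hs.le]; ring
      _ ≤ 1 / 2 * (s ^ p * G) := by
          have : 0 ≤ G := apply_nonneg q _
          gcongr
  have htri := map_sub_le_add q (∑ n ∈ A, a n • x n)
    ((θ * s) • ∑ n ∈ A, (c n * SignType.sign (a n)) • x n)
  rw [← hdecomp, hq, hq, abs_of_pos hs, abs_of_pos (mul_pos hθ hs)] at htri
  linarith

-- Splits the level set into its first layer `s ≤ |xs n f| < (1 + θ) * s`, a difference of two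
-- greedy sets, and the level set at height `(1 + θ) * s`.
theorem rpow_mul_map_sum_level_le (h : IsQuasiGreedyWith K q x xs) (hq : IsPHomogeneous p q)
    (hp : 0 < p) {s θ : ℝ} (hs : 0 < s) (hθ : 0 < θ) (hθK : θ ^ p * (K / (2 ^ p - 1)) ≤ 1 / 2)
    {f : E} {A B : Finset ℕ} (hA : ∀ n, n ∈ A ↔ s ≤ |xs n f|)
    (hB : ∀ n, n ∈ B ↔ (1 + θ) * s ≤ |xs n f|) :
    s ^ p * q (∑ n ∈ A, (SignType.sign (xs n f) : ℝ) • x n) ≤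
      4 * K * q f + s ^ p * q (∑ n ∈ B, (SignType.sign (xs n f) : ℝ) • x n) := by
  have hBA : B ⊆ A := fun n hn =>
    (hA n).2 ((le_mul_of_one_le_left hs.le (by linarith)).trans ((hB n).1 hn))
  have hlayer : ∀ n ∈ A \ B, |xs n f| ∈ Set.Icc s ((1 + θ) * s) := fun n hn => by
    rw [Finset.mem_sdiff, hA, hB, not_le] at hn
    exact ⟨hn.1, hn.2.le⟩
  have hproj : q (∑ n ∈ A \ B, xs n f • x n) ≤ 2 * K * q f := by
    rw [Finset.sum_sdiff_eq_sub hBA]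
    linarith [map_sub_le_add q (∑ n ∈ A, xs n f • x n) (∑ n ∈ B, xs n f • x n),
      h.map_greedy_le f A (greedySet_of_mem_iff hA), h.map_greedy_le f B (greedySet_of_mem_iff hB)]
  have hsigns := h.map_sum_sign_smul_le hq hp hs hθ hθK hlayer
  calc _ ≤ s ^ p * (q (∑ n ∈ A \ B, (SignType.sign (xs n f) : ℝ) • x n) +
          q (∑ n ∈ B, (SignType.sign (xs n f) : ℝ) • x n)) := by
        rw [← Finset.sum_sdiff hBA]
        gcongr
        exact map_add_le_add q _ _
    _ ≤ _ := by linarith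

-- Summing over the layers yields a geometric series of ratio `((1 + θ) ^ p)⁻¹`.
theorem rpow_mul_map_sum_level_le_of_lt_pow (h : IsQuasiGreedyWith K q x xs)
    (hq : IsPHomogeneous p q) (hp : 0 < p) (hK : 0 ≤ K) {θ : ℝ} (hθ : 0 < θ)
    (hθK : θ ^ p * (K / (2 ^ p - 1)) ≤ 1 / 2) {f : E} (k : ℕ) {s : ℝ} (hs : 0 < s) {A : Finset ℕ}
    (hA : ∀ n, n ∈ A ↔ s ≤ |xs n f|) (hk : ∀ n, |xs n f| < (1 + θ) ^ k * s) :
    s ^ p * q (∑ n ∈ A, (SignType.sign (xs n f) : ℝ) • x n) ≤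
      4 * K / (1 - ((1 + θ) ^ p)⁻¹) * q f := by
  have hratio : ((1 + θ) ^ p)⁻¹ < 1 :=
    inv_lt_one_of_one_lt₀ (Real.one_lt_rpow (by linarith) hp)
  induction k generalizing s A with
  | zero =>
    have hA_empty : A = ∅ := Finset.eq_empty_of_forall_notMem fun n hn =>
      ((hA n).1 hn).not_gt (by simpa using hk n)
    rw [hA_empty, Finset.sum_empty, map_zero, mul_zero]
    exact mul_nonneg (div_nonneg (by positivity) (by linarith)) (apply_nonneg q f)
  | succ k ih =>
    have hB : ∀ n, n ∈ {n ∈ A | (1 + θ) * s ≤ |xs n f|} ↔ (1 + θ) * s ≤ |xs n f| := fun n => by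
      rw [Finset.mem_filter, hA, and_iff_right_iff_imp]
      exact (le_mul_of_one_le_left hs.le (by linarith)).trans
    have hupper := ih (by positivity) hB fun n => by rw [← mul_assoc, ← pow_succ]; exact hk n
    have hlayer := h.rpow_mul_map_sum_level_le hq hp hs hθ hθK hA hB
    rw [Real.mul_rpow (by positivity) hs.le, mul_assoc, ← le_inv_mul_iff₀ (by positivity)] at hupper
    refine hlayer.trans ((add_le_add_right hupper _).trans_eq ?_)
    have : 1 - ((1 + θ) ^ p)⁻¹ ≠ 0 := by linarith
    generalize ((1 + θ) ^ p)⁻¹ = r at *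
    field_simp
    ring

theorem exists_isTruncationQuasiGreedyWith (h : IsQuasiGreedyWith K q x xs)
    (hq : IsPHomogeneous p q) (hp : 0 < p) (hK : 0 < K)
    (hfin : ∀ f, ∀ t > 0, {n | t ≤ |xs n f|}.Finite) :
    ∃ T > 0, IsTruncationQuasiGreedyWith p T q x xs := by
  have h2p : (1 : ℝ) < 2 ^ p := Real.one_lt_rpow one_lt_two hp
  have hL : 0 < K / (2 ^ p - 1) := div_pos hK (by linarith)
  obtain ⟨θ, hθ, hθK⟩ : ∃ θ > 0, θ ^ p * (K / (2 ^ p - 1)) ≤ 1 / 2 := by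
    refine ⟨(1 / 2 / (K / (2 ^ p - 1))) ^ p⁻¹, by positivity, ?_⟩
    rw [Real.rpow_inv_rpow (by positivity) hp.ne', div_mul_cancel₀ _ hL.ne']
  have hratio : ((1 + θ) ^ p)⁻¹ < 1 :=
    inv_lt_one_of_one_lt₀ (Real.one_lt_rpow (by linarith) hp)
  refine ⟨2 * K * K * (4 * K / (1 - ((1 + θ) ^ p)⁻¹)),
    mul_pos (by positivity) (div_pos (by positivity) (by linarith)), fun f t ht A e hA he => ?_⟩
  obtain ⟨k, hk⟩ := exists_forall_abs_lt_pow_mul (by linarith : 1 < 1 + θ) ht (hfin f t ht)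
  have hlevel := h.rpow_mul_map_sum_level_le_of_lt_pow hq hp hK.le hθ hθK k ht
    (fun n => (hfin f t ht).mem_toFinset) hk
  set L := (hfin f t ht).toFinset
  have hsign : ∀ n, t ≤ |xs n f| → |(SignType.sign (xs n f) : ℝ)| = 1 := fun n hn =>
    abs_coe_sign (abs_pos.1 (ht.trans_le hn))
  have hchange := h.map_sum_change_signs_le he fun n hn => hsign n (hA n hn)
  have hsubset := h.map_sum_subset_le (S := A) (A := L)
    (fun n hn => (hfin f t ht).mem_toFinset.2 (hA n hn))
    (fun n hn => hsign n ((hfin f t ht).mem_toFinset.1 hn))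
  calc t ^ p * q (∑ n ∈ A, e n • x n)
      ≤ t ^ p * (2 * K * (K * q (∑ n ∈ L, (SignType.sign (xs n f) : ℝ) • x n))) := by
        gcongr
        exact hchange.trans (by gcongr)
    _ = 2 * K * K * (t ^ p * q (∑ n ∈ L, (SignType.sign (xs n f) : ℝ) • x n)) := by ring
    _ ≤ 2 * K * K * (4 * K / (1 - ((1 + θ) ^ p)⁻¹) * q f) := by gcongr
    _ = _ := by ring

end IsQuasiGreedyWith

end QuasiGreedy

section LpSeries

variable {α ι : Type*} {E : α → Type*} [∀ i, NormedAddCommGroup (E i)] {p : ℝ≥0∞}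

theorem rpow_one_sub_mul_rpow {a r : ℝ} (hr0 : 0 ≤ r) (hr1 : r ≤ 1) (ha : 0 ≤ a) :
    a ^ (1 - r) * a ^ r = a := by
  rw [← Real.rpow_add_of_nonneg ha (sub_nonneg.2 hr1) hr0, sub_add_cancel, Real.rpow_one]

theorem le_rpow_one_sub_mul_rpow {a b r : ℝ} (hr0 : 0 ≤ r) (hr1 : r ≤ 1) (ha : 0 ≤ a)
    (hab : a ≤ b) : a ≤ b ^ (1 - r) * a ^ r := by
  calc a = a ^ (1 - r) * a ^ r := (rpow_one_sub_mul_rpow hr0 hr1 ha).symm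
    _ ≤ b ^ (1 - r) * a ^ r := by gcongr ?_ ^ _ * _

theorem norm_add_rpow_le (hp0 : 0 < p.toReal) (hp1 : p.toReal ≤ 1) (f g : lp E p) :
    ‖f + g‖ ^ p.toReal ≤ ‖f‖ ^ p.toReal + ‖g‖ ^ p.toReal := by
  refine hasSum_le (fun i => ?_) (lp.hasSum_norm hp0 (f + g))
    ((lp.hasSum_norm hp0 f).add (lp.hasSum_norm hp0 g))
  calc ‖(f + g) i‖ ^ p.toReal ≤ (‖f i‖ + ‖g i‖) ^ p.toReal := by
        gcongr
        exact norm_add_le _ _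
    _ ≤ ‖f i‖ ^ p.toReal + ‖g i‖ ^ p.toReal :=
        Real.rpow_add_le_add_rpow (norm_nonneg _) (norm_nonneg _) hp0.le hp1

/-- The `p`-th power of the `p`-norm of `ℓ^p`, which for `p ≤ 1` is subadditive. -/
noncomputable def lpPowSeminorm (E : α → Type*) [∀ i, NormedAddCommGroup (E i)] (hp0 : 0 < p.toReal)
    (hp1 : p.toReal ≤ 1) : AddGroupSeminorm (lp E p) where
  toFun f := ‖f‖ ^ p.toReal
  map_zero' := by rw [lp.norm_zero, Real.zero_rpow hp0.ne']
  add_le' := norm_add_rpow_le hp0 hp1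
  neg' f := by rw [lp.norm_neg]

theorem lpPowSeminorm_apply (hp0 : 0 < p.toReal) (hp1 : p.toReal ≤ 1) (f : lp E p) :
    lpPowSeminorm E hp0 hp1 f = ‖f‖ ^ p.toReal := rfl

theorem isPHomogeneous_lpPowSeminorm [∀ i, NormedSpace ℝ (E i)] (hp0 : 0 < p.toReal)
    (hp1 : p.toReal ≤ 1) : IsPHomogeneous p.toReal (lpPowSeminorm E hp0 hp1) := fun c f => by
  rw [lpPowSeminorm_apply, lpPowSeminorm_apply,
    lp.norm_const_smul (ENNReal.toReal_pos_iff.1 hp0).1.ne',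
    Real.mul_rpow (norm_nonneg c) (lp.norm_nonneg' f), Real.norm_eq_abs]

theorem norm_apply_le_rpow_mul_norm_apply_rpow (hp0 : 0 < p.toReal) (hp1 : p.toReal ≤ 1)
    (f : lp E p) (i : α) : ‖f i‖ ≤ ‖f‖ ^ (1 - p.toReal) * ‖f i‖ ^ p.toReal :=
  le_rpow_one_sub_mul_rpow hp0.le hp1 (norm_nonneg _)
    (lp.norm_apply_le_norm (ENNReal.toReal_pos_iff.1 hp0).1.ne' f i)

theorem summable_norm_apply (hp0 : 0 < p.toReal) (hp1 : p.toReal ≤ 1) (f : lp E p) :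
    Summable fun i => ‖f i‖ :=
  ((lp.hasSum_norm hp0 f).summable.mul_left _).of_nonneg_of_le (fun _ => norm_nonneg _)
    (norm_apply_le_rpow_mul_norm_apply_rpow hp0 hp1 f)

theorem tsum_norm_apply_le_norm (hp0 : 0 < p.toReal) (hp1 : p.toReal ≤ 1) (f : lp E p) :
    ∑' i, ‖f i‖ ≤ ‖f‖ := by
  calc ∑' i, ‖f i‖ ≤ ‖f‖ ^ (1 - p.toReal) * ‖f‖ ^ p.toReal :=
        hasSum_le (norm_apply_le_rpow_mul_norm_apply_rpow hp0 hp1 f)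
          (summable_norm_apply hp0 hp1 f).hasSum ((lp.hasSum_norm hp0 f).mul_left _)
    _ = ‖f‖ := rpow_one_sub_mul_rpow hp0.le hp1 (lp.norm_nonneg' f)

theorem exists_hasSum_norm_rpow_le_tsum {F : Type*} [NormedAddCommGroup F] [CompleteSpace F]
    (hp0 : 0 < p.toReal) (hp1 : p.toReal ≤ 1) {v : ι → F}
    (hv : Summable fun n => ‖v n‖ ^ p.toReal) :
    ∃ y, HasSum v y ∧ ‖y‖ ^ p.toReal ≤ ∑' n, ‖v n‖ ^ p.toReal := by
  set g : ℓ^p(ι, F) := ⟨v, memℓp_gen hv⟩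
  have hg : Summable fun n => ‖v n‖ := summable_norm_apply hp0 hp1 g
  refine ⟨_, hg.of_norm.hasSum, ?_⟩
  calc ‖∑' n, v n‖ ^ p.toReal ≤ ‖g‖ ^ p.toReal := by
        gcongr
        exact (norm_tsum_le_tsum_norm hg).trans (tsum_norm_apply_le_norm hp0 hp1 g)
    _ = ∑' n, ‖v n‖ ^ p.toReal := lp.norm_rpow_eq_tsum hp0 g

theorem exists_forall_hasSum_norm_rpow_le_tsum [∀ i, CompleteSpace (E i)] (hp0 : 0 < p.toReal)
    (hp1 : p.toReal ≤ 1) {u : ι → lp E p} (hu : Summable fun n => ‖u n‖ ^ p.toReal) :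
    ∃ f : lp E p, (∀ i, HasSum (fun n => u n i) (f i)) ∧
      ‖f‖ ^ p.toReal ≤ ∑' n, ‖u n‖ ^ p.toReal := by
  have hprod : Summable fun z : ι × α => ‖u z.1 z.2‖ ^ p.toReal := by
    refine (summable_prod_of_nonneg fun z => by positivity).2
      ⟨fun n => (lp.hasSum_norm hp0 (u n)).summable, ?_⟩
    simpa only [← lp.norm_rpow_eq_tsum hp0] using hu
  have hcol (i : α) : Summable fun n => ‖u n i‖ ^ p.toReal := hprod.prod_symm.prod_factor i
  have hcols : Summable fun i => ∑' n, ‖u n i‖ ^ p.toReal := hprod.prod_symm.prod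
  choose g hg hg_le using fun i => exists_hasSum_norm_rpow_le_tsum hp0 hp1 (hcol i)
  have hg_summable : Summable fun i => ‖g i‖ ^ p.toReal :=
    hcols.of_nonneg_of_le (fun i => by positivity) hg_le
  refine ⟨⟨g, memℓp_gen hg_summable⟩, hg, ?_⟩
  calc _ = ∑' i, ‖g i‖ ^ p.toReal := lp.norm_rpow_eq_tsum hp0 _
    _ ≤ ∑' i, ∑' n, ‖u n i‖ ^ p.toReal := hg_summable.tsum_le_tsum hg_le hcols
    _ = ∑' n, ∑' i, ‖u n i‖ ^ p.toReal := hprod.tsum_comm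
    _ = ∑' n, ‖u n‖ ^ p.toReal := by simp only [← lp.norm_rpow_eq_tsum hp0]

theorem exists_tendsto_norm_sub_sum [∀ i, CompleteSpace (E i)] (hp0 : 0 < p.toReal)
    (hp1 : p.toReal ≤ 1) {u : ι → lp E p} (hu : Summable fun n => ‖u n‖ ^ p.toReal) :
    ∃ f : lp E p, Tendsto (fun s : Finset ι => ‖f - ∑ n ∈ s, u n‖) atTop (𝓝 0) ∧
      ‖f‖ ^ p.toReal ≤ ∑' n, ‖u n‖ ^ p.toReal := by
  obtain ⟨f, hf, hf_le⟩ := exists_forall_hasSum_norm_rpow_le_tsum hp0 hp1 hu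
  refine ⟨f, ?_, hf_le⟩
  have htail (s : Finset ι) :
      ‖f - ∑ n ∈ s, u n‖ ^ p.toReal ≤ ∑' n : {n // n ∉ s}, ‖u n‖ ^ p.toReal := by
    have hu_compl : Summable fun n : {n // n ∉ s} => ‖u n‖ ^ p.toReal :=
      hu.comp_injective Subtype.val_injective
    obtain ⟨g, hg, hg_le⟩ := exists_forall_hasSum_norm_rpow_le_tsum hp0 hp1 hu_compl
    have : f - ∑ n ∈ s, u n = g := lp.ext <| funext fun i => by
      rw [lp.coeFn_sub, Pi.sub_apply, lp.coeFn_sum, Finset.sum_apply, sub_eq_iff_eq_add]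
      exact (hf i).unique ((s.hasSum_compl_iff (f := fun n => u n i)).1 (hg i))
    rwa [this]
  have hpow : Tendsto (fun s : Finset ι => ‖f - ∑ n ∈ s, u n‖ ^ p.toReal) atTop (𝓝 0) :=
    squeeze_zero (fun s => Real.rpow_nonneg (lp.norm_nonneg' _) _) htail
      (tendsto_tsum_compl_atTop_zero fun n => ‖u n‖ ^ p.toReal)
  simpa only [Real.rpow_rpow_inv (lp.norm_nonneg' _) hp0.ne', Real.zero_rpow (inv_ne_zero hp0.ne')]
    using hpow.rpow_const (p := p.toReal⁻¹) (Or.inr (by positivity))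

theorem exists_tendsto_norm_sub_sum_smul [∀ i, NormedSpace ℝ (E i)] [∀ i, CompleteSpace (E i)]
    (hp0 : 0 < p.toReal) (hp1 : p.toReal ≤ 1) {u : ι → lp E p} {D : ℝ} (hD : 0 ≤ D)
    (hu : ∀ n, ‖u n‖ ≤ D) {a : ι → ℝ} (ha : Summable fun n => |a n| ^ p.toReal) :
    ∃ f : lp E p, Tendsto (fun s : Finset ι => ‖f - ∑ n ∈ s, a n • u n‖) atTop (𝓝 0) ∧
      ‖f‖ ≤ D * (∑' n, |a n| ^ p.toReal) ^ (1 / p.toReal) := by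
  have hterm (n : ι) : ‖a n • u n‖ ^ p.toReal ≤ D ^ p.toReal * |a n| ^ p.toReal := by
    have hnorm := lp.norm_nonneg' (u n)
    rw [lp.norm_const_smul (ENNReal.toReal_pos_iff.1 hp0).1.ne', Real.norm_eq_abs, mul_comm,
      Real.mul_rpow hnorm (abs_nonneg _)]
    gcongr
    exact hu n
  have hsummable : Summable fun n => ‖a n • u n‖ ^ p.toReal :=
    (ha.mul_left _).of_nonneg_of_le (fun n => Real.rpow_nonneg (lp.norm_nonneg' _) _) hterm
  obtain ⟨f, hf, hf_le⟩ := exists_tendsto_norm_sub_sum hp0 hp1 hsummable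
  have htsum : 0 ≤ ∑' n, |a n| ^ p.toReal := tsum_nonneg fun n => by positivity
  refine ⟨f, hf, (Real.rpow_le_rpow_iff (lp.norm_nonneg' f) (by positivity) hp0).1 ?_⟩
  calc ‖f‖ ^ p.toReal ≤ ∑' n, D ^ p.toReal * |a n| ^ p.toReal :=
        hf_le.trans (hsummable.tsum_le_tsum hterm (ha.mul_left _))
    _ = (D * (∑' n, |a n| ^ p.toReal) ^ (1 / p.toReal)) ^ p.toReal := by
        rw [tsum_mul_left, Real.mul_rpow hD (by positivity), one_div,
          Real.rpow_inv_rpow htsum hp0.ne']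

end LpSeries

section LpFunctionals

variable {α : Type*} [DecidableEq α] {p : ℝ≥0∞} {F : ℓ^p(α, ℝ) →ₗ[ℝ] ℝ} {b : ℝ}

theorem hasSum_mul_apply_single (hp0 : 0 < p.toReal) (hF : ∀ f, |F f| ≤ b * ‖f‖)
    (f : ℓ^p(α, ℝ)) : HasSum (fun j => f j * F (lp.single p j 1)) (F f) := by
  have hpow : Tendsto (fun s => ‖f - ∑ j ∈ s, lp.single p j (f j)‖ ^ p.toReal) atTop (𝓝 0) := by
    have hf : Tendsto (fun s => ∑ j ∈ s, ‖f j‖ ^ p.toReal) atTop (𝓝 (‖f‖ ^ p.toReal)) :=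
      lp.hasSum_norm hp0 f
    simpa only [lp.norm_compl_sum_single hp0, sub_self] using hf.const_sub (‖f‖ ^ p.toReal)
  have hnorm : Tendsto (fun s => ‖f - ∑ j ∈ s, lp.single p j (f j)‖) atTop (𝓝 0) := by
    simpa only [Real.rpow_rpow_inv (lp.norm_nonneg' _) hp0.ne',
      Real.zero_rpow (inv_ne_zero hp0.ne')] using
      hpow.rpow_const (p := p.toReal⁻¹) (Or.inr (by positivity))
  have hsingle (j : α) : F (lp.single p j (f j)) = f j * F (lp.single p j 1) := by
    rw [← smul_eq_mul, ← map_smul, ← lp.single_smul, smul_eq_mul, mul_one]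
  have hsub : Tendsto (fun s => F f - ∑ j ∈ s, f j * F (lp.single p j 1)) atTop (𝓝 0) := by
    refine squeeze_zero_norm (fun s => ?_) (by simpa only [mul_zero] using hnorm.const_mul b)
    simpa only [map_sub, map_sum, hsingle, Real.norm_eq_abs] using
      hF (f - ∑ j ∈ s, lp.single p j (f j))
  have hsum := hsub.const_sub (F f)
  simp only [sub_sub_cancel, sub_zero] at hsum
  exact hsum

theorem abs_apply_single_le (hp0 : 0 < p.toReal) (hF : ∀ f, |F f| ≤ b * ‖f‖) (j : α) :
    |F (lp.single p j 1)| ≤ b := by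
  simpa [lp.norm_single (ENNReal.toReal_pos_iff.1 hp0).1] using hF (lp.single p j 1)

theorem abs_apply_le_of_forall_abs_apply_single_le (hp0 : 0 < p.toReal) (hp1 : p.toReal ≤ 1)
    (hF : ∀ f, |F f| ≤ b * ‖f‖) {δ η : ℝ} (hδ : 0 ≤ δ) (hη : 0 ≤ η) {f : ℓ^p(α, ℝ)}
    (hsmall : ∀ j, δ ≤ |f j| → |F (lp.single p j 1)| ≤ η) :
    |F f| ≤ η * ‖f‖ + b * δ ^ (1 - p.toReal) * ‖f‖ ^ p.toReal := by
  have hterm (j : α) : |f j * F (lp.single p j 1)| ≤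
      η * ‖f j‖ + b * δ ^ (1 - p.toReal) * ‖f j‖ ^ p.toReal := by
    have hb : 0 ≤ b := (abs_nonneg _).trans (abs_apply_single_le hp0 hF j)
    rw [abs_mul, Real.norm_eq_abs]
    rcases le_or_gt δ |f j| with hj | hj
    · calc |f j| * |F (lp.single p j 1)| ≤ η * |f j| := by
            rw [mul_comm]
            gcongr
            exact hsmall j hj
        _ ≤ _ := le_add_of_nonneg_right (by positivity)
    · calc |f j| * |F (lp.single p j 1)| ≤ δ ^ (1 - p.toReal) * |f j| ^ p.toReal * b := by
            gcongr
            · exact le_rpow_one_sub_mul_rpow hp0.le hp1 (abs_nonneg _) hj.le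
            · exact abs_apply_single_le hp0 hF j
        _ = b * δ ^ (1 - p.toReal) * |f j| ^ p.toReal := by ring
        _ ≤ _ := le_add_of_nonneg_left (by positivity)
  have hsum := ((summable_norm_apply hp0 hp1 f).hasSum.mul_left η).add
    ((lp.hasSum_norm hp0 f).mul_left (b * δ ^ (1 - p.toReal)))
  have hFf := hasSum_mul_apply_single hp0 hF f
  calc |F f| = ‖∑' j, f j * F (lp.single p j 1)‖ := by rw [hFf.tsum_eq, Real.norm_eq_abs]
    _ ≤ η * ∑' j, ‖f j‖ + b * δ ^ (1 - p.toReal) * ‖f‖ ^ p.toReal :=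
        tsum_of_norm_bounded hsum hterm
    _ ≤ η * ‖f‖ + b * δ ^ (1 - p.toReal) * ‖f‖ ^ p.toReal := by
        gcongr
        exact tsum_norm_apply_le_norm hp0 hp1 f

theorem exists_forall_exists_le_abs_and_le_abs_apply_single (hp0 : 0 < p.toReal)
    (hp1 : p.toReal < 1) {D : ℝ} (hb : 0 < b) (hD : 0 < D) :
    ∃ δ > 0, ∃ η > 0, ∀ (F : ℓ^p(α, ℝ) →ₗ[ℝ] ℝ) (f : ℓ^p(α, ℝ)), (∀ g, |F g| ≤ b * ‖g‖) →
      ‖f‖ ≤ D → F f = 1 → ∃ j, δ ≤ |f j| ∧ η ≤ |F (lp.single p j 1)| := by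
  have hp1' : 0 < 1 - p.toReal := sub_pos.2 hp1
  refine ⟨(1 / (4 * b * D ^ p.toReal)) ^ (1 - p.toReal)⁻¹, by positivity, 1 / (4 * D),
    by positivity, fun F f hF hfD hFf => ?_⟩
  by_contra! hsmall
  have habs := abs_apply_le_of_forall_abs_apply_single_le hp0 hp1.le hF
    (δ := (1 / (4 * b * D ^ p.toReal)) ^ (1 - p.toReal)⁻¹) (η := 1 / (4 * D))
    (by positivity) (by positivity) fun j hj => (hsmall j hj).le
  have hnorm := lp.norm_nonneg' f
  have : (1 : ℝ) ≤ 1 / 2 := by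
    calc (1 : ℝ) = |F f| := by rw [hFf, abs_one]
      _ ≤ 1 / (4 * D) * D + b * (1 / (4 * b * D ^ p.toReal)) * D ^ p.toReal := by
          rw [Real.rpow_inv_rpow (by positivity) hp1'.ne'] at habs
          exact habs.trans (by gcongr)
      _ = 1 / 2 := by field_simp; norm_num
  norm_num at this

end LpFunctionals

section Counting

variable {α ι : Type*} {E : α → Type*} [∀ i, NormedAddCommGroup (E i)] {p : ℝ≥0∞}

-- Pairs each `U` not containing `n` with `insert n U`.
theorem two_pow_card_mul_norm_rpow_le {G : Type*} [NormedAddCommGroup G] {r : ℝ} (hr0 : 0 ≤ r)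
    (hr1 : r ≤ 1) (v : ι → G) {s : Finset ι} {n : ι} (hn : n ∈ s) :
    2 ^ s.card * ‖v n‖ ^ r ≤ 2 * ∑ U ∈ s.powerset, ‖∑ k ∈ U, v k‖ ^ r := by
  classical
  have hpair {U : Finset ι} (hU : U ∈ (s.erase n).powerset) :
      ‖v n‖ ^ r ≤ ‖∑ k ∈ U, v k‖ ^ r + ‖∑ k ∈ insert n U, v k‖ ^ r := by
    rw [Finset.sum_insert fun h => Finset.notMem_erase n s (Finset.mem_powerset.1 hU h)]
    calc ‖v n‖ ^ r ≤ (‖∑ k ∈ U, v k‖ + ‖v n + ∑ k ∈ U, v k‖) ^ r := by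
          gcongr
          rw [add_comm]
          exact norm_le_add_norm_add _ _
      _ ≤ _ := Real.rpow_add_le_add_rpow (norm_nonneg _) (norm_nonneg _) hr0 hr1
  calc 2 ^ s.card * ‖v n‖ ^ r = 2 * ∑ _U ∈ (s.erase n).powerset, ‖v n‖ ^ r := by
        rw [Finset.sum_const, Finset.card_powerset, nsmul_eq_mul, ← Finset.card_erase_add_one hn]
        push_cast
        ring
    _ ≤ 2 * ∑ U ∈ (s.erase n).powerset,
          (‖∑ k ∈ U, v k‖ ^ r + ‖∑ k ∈ insert n U, v k‖ ^ r) := by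
        gcongr with U hU
        exact hpair hU
    _ = 2 * ∑ U ∈ s.powerset, ‖∑ k ∈ U, v k‖ ^ r := by
        rw [← Finset.insert_erase hn, Finset.sum_powerset_insert (Finset.notMem_erase n s),
          Finset.insert_erase hn, Finset.sum_add_distrib]

theorem card_image_mul_rpow_le [DecidableEq α] (hp0 : 0 < p.toReal) (hp1 : p.toReal ≤ 1)
    {u : ι → lp E p} {J : ι → α} {s : Finset ι} {δ R : ℝ} (hδ : 0 ≤ δ)
    (hJ : ∀ n ∈ s, δ ≤ ‖u n (J n)‖) (hR : ∀ U ⊆ s, ‖∑ n ∈ U, u n‖ ^ p.toReal ≤ R) :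
    (s.image J).card * δ ^ p.toReal ≤ 2 * R := by
  have hcoord : ∀ j ∈ s.image J, 2 ^ s.card * δ ^ p.toReal ≤
      2 * ∑ U ∈ s.powerset, ‖(∑ k ∈ U, u k) j‖ ^ p.toReal := by
    simp only [Finset.forall_mem_image, lp.coeFn_sum, Finset.sum_apply]
    intro n hn
    refine le_trans ?_ (two_pow_card_mul_norm_rpow_le hp0.le hp1 (fun k => u k (J n)) hn)
    gcongr
    exact hJ n hn
  refine le_of_mul_le_mul_left ?_ (by positivity : (0 : ℝ) < 2 ^ s.card)
  calc (2 : ℝ) ^ s.card * ((s.image J).card * δ ^ p.toReal)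
      = ∑ j ∈ s.image J, 2 ^ s.card * δ ^ p.toReal := by
        rw [Finset.sum_const, nsmul_eq_mul]; ring
    _ ≤ ∑ j ∈ s.image J, 2 * ∑ U ∈ s.powerset, ‖(∑ k ∈ U, u k) j‖ ^ p.toReal :=
        Finset.sum_le_sum hcoord
    _ = 2 * ∑ U ∈ s.powerset, ∑ j ∈ s.image J, ‖(∑ k ∈ U, u k) j‖ ^ p.toReal := by
        rw [← Finset.mul_sum, Finset.sum_comm]
    _ ≤ 2 * ∑ _U ∈ s.powerset, R := by
        gcongr with U hU
        exact (lp.sum_rpow_le_norm_rpow hp0 _ _).trans (hR U (Finset.mem_powerset.1 hU))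
    _ = 2 ^ s.card * (2 * R) := by
        rw [Finset.sum_const, Finset.card_powerset, nsmul_eq_mul]
        push_cast
        ring

end Counting

section WeakType

variable {α ι : Type*} {p : ℝ≥0∞} {hp0 : 0 < p.toReal} {hp1 : p.toReal ≤ 1}
  {T : ℝ} {x : ι → ℓ^p(α, ℝ)} {xs : ι → ℓ^p(α, ℝ) →ₗ[ℝ] ℝ}

namespace IsTruncationQuasiGreedyWith

-- Tests the truncation property on the `j`-th unit vector, with signs aligned at coordinate `j`.
theorem card_le_of_forall_le_abs_apply [DecidableEq α]
    (hT : IsTruncationQuasiGreedyWith p.toReal T (lpPowSeminorm (fun _ : α => ℝ) hp0 hp1) x xs)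
    {δ η : ℝ} (hδ : 0 < δ) (hη : 0 < η) {j : α} {A : Finset ι} (hx : ∀ n ∈ A, δ ≤ |x n j|)
    (hxs : ∀ n ∈ A, η ≤ |xs n (lp.single p j 1)|) :
    A.card ≤ T ^ p.toReal⁻¹ / (δ * η) := by
  set e : ι → ℝ := fun n => SignType.sign (x n j)
  have he : ∀ n ∈ A, |e n| = 1 := fun n hn => abs_coe_sign (abs_pos.1 (hδ.trans_le (hx n hn)))
  have hsum : A.card * δ ≤ ‖∑ n ∈ A, e n • x n‖ := by
    calc A.card * δ = ∑ _n ∈ A, δ := by rw [Finset.sum_const, nsmul_eq_mul]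
      _ ≤ ∑ n ∈ A, |x n j| := Finset.sum_le_sum hx
      _ = (∑ n ∈ A, e n • x n) j := by
          simp only [lp.coeFn_sum, Finset.sum_apply, lp.coeFn_smul, Pi.smul_apply, smul_eq_mul, e,
            sign_mul_self]
      _ ≤ ‖∑ n ∈ A, e n • x n‖ := (Real.le_norm_self _).trans
          (lp.norm_apply_le_norm (ENNReal.toReal_pos_iff.1 hp0).1.ne' _ j)
  have htrunc : η ^ p.toReal * ‖∑ n ∈ A, e n • x n‖ ^ p.toReal ≤ T := by
    simpa only [lpPowSeminorm_apply, lp.norm_single (ENNReal.toReal_pos_iff.1 hp0).1, norm_one,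
      Real.one_rpow, mul_one] using hT (lp.single p j 1) η hη A e hxs he
  have hnorm := lp.norm_nonneg' (∑ n ∈ A, e n • x n)
  rw [← Real.mul_rpow hη.le hnorm] at htrunc
  rw [le_div_iff₀ (by positivity)]
  calc A.card * (δ * η) = η * (A.card * δ) := by ring
    _ ≤ η * ‖∑ n ∈ A, e n • x n‖ := by gcongr
    _ ≤ T ^ p.toReal⁻¹ := (Real.le_rpow_inv_iff_of_pos (by positivity)
        ((Real.rpow_nonneg (by positivity) _).trans htrunc) hp0).2 htrunc

theorem rpow_mul_card_image_le [DecidableEq α]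
    (hT : IsTruncationQuasiGreedyWith p.toReal T (lpPowSeminorm (fun _ : α => ℝ) hp0 hp1) x xs)
    {δ t : ℝ} (hδ : 0 < δ) (ht : 0 < t) {J : ι → α} (hJ : ∀ n, δ ≤ |x n (J n)|) {f : ℓ^p(α, ℝ)}
    {s : Finset ι} (hs : ∀ n ∈ s, t ≤ |xs n f|) :
    t ^ p.toReal * (s.image J).card ≤ 2 * T / δ ^ p.toReal * ‖f‖ ^ p.toReal := by
  have hsum : ∀ U ⊆ s, ‖∑ n ∈ U, x n‖ ^ p.toReal ≤ T * ‖f‖ ^ p.toReal / t ^ p.toReal := by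
    intro U hU
    rw [le_div_iff₀' (by positivity)]
    simpa only [lpPowSeminorm_apply, Pi.one_apply, one_smul] using
      hT f t ht U 1 (fun n hn => hs n (hU hn)) fun _ _ => abs_one
  have hcard := card_image_mul_rpow_le hp0 hp1 hδ.le (fun n _ => hJ n) hsum
  rw [← mul_div_assoc, le_div_iff₀ (by positivity)] at hcard
  rw [div_mul_eq_mul_div, le_div_iff₀ (by positivity)]
  linarith

theorem exists_rpow_mul_card_le (hp1 : p.toReal < 1)
    (hT : IsTruncationQuasiGreedyWith p.toReal T (lpPowSeminorm (fun _ : α => ℝ) hp0 hp1.le) x xs)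
    (hTpos : 0 < T) {b D : ℝ} (hb : 0 < b) (hD : 0 < D) (hxs : ∀ n f, |xs n f| ≤ b * ‖f‖)
    (hx : ∀ n, ‖x n‖ ≤ D) (hbiorth : ∀ n, xs n (x n) = 1) :
    ∃ R > 0, ∀ (f : ℓ^p(α, ℝ)) (t : ℝ) (s : Finset ι), 0 < t → (∀ n ∈ s, t ≤ |xs n f|) →
      t ^ p.toReal * s.card ≤ R * ‖f‖ ^ p.toReal := by
  classical
  obtain ⟨δ, hδ, η, hη, hpeak⟩ :=
    exists_forall_exists_le_abs_and_le_abs_apply_single (α := α) hp0 hp1 hb hD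
  choose J hJx hJxs using fun n => hpeak (xs n) (x n) (hxs n) (hx n) (hbiorth n)
  set M := T ^ p.toReal⁻¹ / (δ * η)
  refine ⟨M * (2 * T / δ ^ p.toReal), by positivity, fun f t s ht hs => ?_⟩
  have hfiber (j : α) : ((s.filter (J · = j)).card : ℝ) ≤ M :=
    hT.card_le_of_forall_le_abs_apply hδ hη
      (fun n hn => (Finset.mem_filter.1 hn).2 ▸ hJx n)
      (fun n hn => (Finset.mem_filter.1 hn).2 ▸ hJxs n)
  calc t ^ p.toReal * s.card
      = t ^ p.toReal * ∑ j ∈ s.image J, ((s.filter (J · = j)).card : ℝ) := by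
        rw [Finset.card_eq_sum_card_image J s, Nat.cast_sum]
    _ ≤ t ^ p.toReal * ∑ _j ∈ s.image J, M := by
        gcongr with j
        exact hfiber j
    _ = M * (t ^ p.toReal * (s.image J).card) := by
        rw [Finset.sum_const, nsmul_eq_mul]; ring
    _ ≤ M * (2 * T / δ ^ p.toReal * ‖f‖ ^ p.toReal) := by
        gcongr M * ?_
        exact hT.rpow_mul_card_image_le hδ ht hJx hs
    _ = M * (2 * T / δ ^ p.toReal) * ‖f‖ ^ p.toReal := by ring

end IsTruncationQuasiGreedyWith

end WeakType

section Basis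

variable {p : ℝ≥0∞} {x : ℕ → ℕ → ℝ} {xs : ℕ → (ℕ → ℝ) → ℝ}

theorem pNorm_coe_eq_norm (hp0 : 0 < p.toReal) (f : ℓ^p(ℕ, ℝ)) : pNorm p.toReal f = ‖f‖ :=
  (lp.norm_eq_tsum_rpow hp0 f).symm

theorem memLpSeq_coe (hp0 : 0 < p.toReal) (f : ℓ^p(ℕ, ℝ)) : MemLpSeq p.toReal f :=
  (lp.memℓp f).summable hp0

namespace IsLpBasis

/-- The basis vectors of an `IsLpBasis`, as elements of Mathlib's `ℓ^p`. -/
def vec (h : IsLpBasis p.toReal x xs) (n : ℕ) : ℓ^p(ℕ, ℝ) := ⟨x n, memℓp_gen (h.mem n)⟩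

/-- The coordinate functionals of an `IsLpBasis`, restricted to linear maps on Mathlib's `ℓ^p`. -/
def coord (h : IsLpBasis p.toReal x xs) (hp0 : 0 < p.toReal) (n : ℕ) : ℓ^p(ℕ, ℝ) →ₗ[ℝ] ℝ where
  toFun f := xs n f
  map_add' f g := h.map_add n f g (memLpSeq_coe hp0 f) (memLpSeq_coe hp0 g)
  map_smul' c f := h.map_smul n c f (memLpSeq_coe hp0 f)

theorem coe_sum_smul_vec (h : IsLpBasis p.toReal x xs) (A : Finset ℕ) (c : ℕ → ℝ) :
    ⇑(∑ n ∈ A, c n • h.vec n) = fun j => ∑ n ∈ A, c n * x n j := by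
  ext j
  simp only [lp.coeFn_sum, Finset.sum_apply, lp.coeFn_smul, Pi.smul_apply, smul_eq_mul, vec]

theorem exists_norm_vec_le (h : IsLpBasis p.toReal x xs) (hp0 : 0 < p.toReal) :
    ∃ D > 0, ∀ n, ‖h.vec n‖ ≤ D := by
  obtain ⟨D, hD⟩ := h.norm_ub
  refine ⟨max D 1, by positivity, fun n => ?_⟩
  rw [← pNorm_coe_eq_norm hp0]
  exact (hD n).trans (le_max_left D 1)

theorem exists_abs_coord_le (h : IsLpBasis p.toReal x xs) (hp0 : 0 < p.toReal) :
    ∃ b > 0, ∀ n f, |h.coord hp0 n f| ≤ b * ‖f‖ := by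
  obtain ⟨b, hb⟩ := h.bdd
  refine ⟨max b 1, by positivity, fun n f => ?_⟩
  calc |h.coord hp0 n f| ≤ b * ‖f‖ := pNorm_coe_eq_norm hp0 f ▸ hb n f (memLpSeq_coe hp0 f)
    _ ≤ max b 1 * ‖f‖ := mul_le_mul_of_nonneg_right (le_max_left b 1) (lp.norm_nonneg' f)

theorem finite_setOf_le_abs_coord (h : IsLpBasis p.toReal x xs) (hp0 : 0 < p.toReal)
    (f : ℓ^p(ℕ, ℝ)) {t : ℝ} (ht : 0 < t) : {n | t ≤ |h.coord hp0 n f|}.Finite := by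
  obtain ⟨b, hb, hcoord⟩ := h.exists_abs_coord_le hp0
  obtain ⟨A, c, hA⟩ := h.dense f (memLpSeq_coe hp0 f) (t / b) (by positivity)
  have hnorm : ‖f - ∑ k ∈ A, c k • h.vec k‖ < t / b := by
    rw [← pNorm_coe_eq_norm hp0, lp.coeFn_sub, coe_sum_smul_vec]
    exact hA
  exact A.finite_toSet.subset <| setOf_le_abs_coord_subset h.biorth fun n =>
    (hcoord n _).trans_lt ((lt_div_iff₀' hb).1 hnorm)

theorem exists_isQuasiGreedyWith (h : IsLpBasis p.toReal x xs) (hp0 : 0 < p.toReal)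
    (hp1 : p.toReal ≤ 1) (hqg : QuasiGreedy p.toReal x xs) :
    ∃ K > 0, IsQuasiGreedyWith K (lpPowSeminorm (fun _ : ℕ => ℝ) hp0 hp1) h.vec
      (h.coord hp0) := by
  obtain ⟨C, hC, hgreedy⟩ := hqg
  refine ⟨C ^ p.toReal, by positivity, h.biorth, fun f A hA => ?_⟩
  have hproj : ‖∑ n ∈ A, h.coord hp0 n f • h.vec n‖ ≤ C * ‖f‖ := by
    rw [← pNorm_coe_eq_norm hp0, ← pNorm_coe_eq_norm hp0, coe_sum_smul_vec]
    exact hgreedy f (memLpSeq_coe hp0 f) A hA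
  rw [lpPowSeminorm_apply, lpPowSeminorm_apply,
    ← Real.mul_rpow (by positivity) (lp.norm_nonneg' f)]
  exact Real.rpow_le_rpow (lp.norm_nonneg' _) hproj hp0.le

theorem exists_tendsto_pNorm_sub_sum (h : IsLpBasis p.toReal x xs) (hp0 : 0 < p.toReal)
    (hp1 : p.toReal ≤ 1) {D : ℝ} (hD : 0 ≤ D) (hvec : ∀ n, ‖h.vec n‖ ≤ D) {a : ℕ → ℝ}
    (ha : Summable fun n => |a n| ^ p.toReal) :
    ∃ f, MemLpSeq p.toReal f ∧
      Tendsto (fun N => pNorm p.toReal fun j => f j - ∑ n ∈ Finset.range N, a n * x n j) atTop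
        (𝓝 0) ∧
      pNorm p.toReal f ≤ D * (∑' n, |a n| ^ p.toReal) ^ (1 / p.toReal) := by
  obtain ⟨f, hf, hf_le⟩ := exists_tendsto_norm_sub_sum_smul hp0 hp1 hD hvec ha
  refine ⟨f, memLpSeq_coe hp0 f, (hf.comp tendsto_finset_range).congr fun N => ?_,
    (pNorm_coe_eq_norm hp0 f).trans_le hf_le⟩
  rw [Function.comp_apply, ← pNorm_coe_eq_norm hp0, lp.coeFn_sub, coe_sum_smul_vec]
  rfl

theorem exists_rpow_mul_card_le (h : IsLpBasis p.toReal x xs) (hp0 : 0 < p.toReal)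
    (hp1 : p.toReal < 1) (hqg : QuasiGreedy p.toReal x xs) :
    ∃ R > 0, ∀ (f : ℓ^p(ℕ, ℝ)) (t : ℝ) (s : Finset ℕ), 0 < t → (∀ n ∈ s, t ≤ |xs n f|) →
      t ^ p.toReal * s.card ≤ R * ‖f‖ ^ p.toReal := by
  obtain ⟨b, hb, hcoord⟩ := h.exists_abs_coord_le hp0
  obtain ⟨D, hD, hvec⟩ := h.exists_norm_vec_le hp0
  obtain ⟨K, hK, hgreedy⟩ := h.exists_isQuasiGreedyWith hp0 hp1.le hqg
  obtain ⟨T, hT, htrunc⟩ := hgreedy.exists_isTruncationQuasiGreedyWith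
    (isPHomogeneous_lpPowSeminorm _ _) hp0 hK fun f _ => h.finite_setOf_le_abs_coord hp0 f
  exact htrunc.exists_rpow_mul_card_le hp1 hT hb hD hcoord hvec fun n =>
    (h.biorth n n).trans (if_pos rfl)

end IsLpBasis

end Basis

/-- For a quasi-greedy basis of `ℓ_p`, `0<p<1`: (a) `ℓ_p` embeds in `ℓ_p` via
the basis, and (b) `ℓ_p` embeds in weak-`ℓ_p` via the basis. -/
theorem stmt6 (p : ℝ) (hp0 : 0 < p) (hp1 : p < 1)
    (x : ℕ → ℕ → ℝ) (xs : ℕ → (ℕ → ℝ) → ℝ)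
    (hbasis : IsLpBasis p x xs) (hqg : QuasiGreedy p x xs) :
    ∃ C : ℝ, 0 < C ∧
      (∀ a : ℕ → ℝ, Summable (fun n => |a n| ^ p) →
        ∃ f : ℕ → ℝ, MemLpSeq p f ∧
          Filter.Tendsto
            (fun N => pNorm p (fun j => f j - ∑ n ∈ Finset.range N, a n * x n j))
            Filter.atTop (nhds 0) ∧
          pNorm p f ≤ C * (∑' n, |a n| ^ p) ^ (1 / p)) ∧
      (∀ f, MemLpSeq p f → ∀ t : ℝ, 0 < t → ∀ s : Finset ℕ,
        (∀ n ∈ s, t ≤ |xs n f|) →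
        (s.card : ℝ) ≤ C ^ p * pNorm p f ^ p / t ^ p) := by
  obtain ⟨p, rfl⟩ : ∃ r : ℝ≥0∞, r.toReal = p := ⟨.ofReal p, ENNReal.toReal_ofReal hp0.le⟩
  obtain ⟨D, hD, hvec⟩ := hbasis.exists_norm_vec_le hp0
  obtain ⟨R, hR, hcard⟩ := hbasis.exists_rpow_mul_card_le hp0 hp1 hqg
  refine ⟨max D (R ^ p.toReal⁻¹), by positivity, fun a ha => ?_, fun f hf t ht s hs => ?_⟩
  · obtain ⟨f, hf, htendsto, hle⟩ := hbasis.exists_tendsto_pNorm_sub_sum hp0 hp1.le hD.le hvec ha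
    refine ⟨f, hf, htendsto, hle.trans ?_⟩
    gcongr
    exact le_max_left _ _
  · have hcard_le := hcard ⟨f, memℓp_gen hf⟩ t s ht hs
    rw [← pNorm_coe_eq_norm hp0] at hcard_le
    have hRC : R ≤ max D (R ^ p.toReal⁻¹) ^ p.toReal :=
      (Real.rpow_inv_le_iff_of_pos hR.le (by positivity) hp0).1 (le_max_right _ _)
    rw [le_div_iff₀' (by positivity)]
    refine hcard_le.trans (mul_le_mul_of_nonneg_right hRC (Real.rpow_nonneg ?_ _))
    exact Real.rpow_nonneg (tsum_nonneg fun j => by positivity) _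
end

section
/- Let 0<p≤1 and consider the difference basis of ℓ_p: d_1 = e_1 and d_n = e_n − e_{n−1} for n ≥ 2, with biorthogonal functionals d_n*(f) = Σ_{j≥n} f(j) (the sum converges absolutely since ℓ_p ⊆ ℓ_1). Then for every m ≥ 1 the m-th conditionality constant satisfies k_m ≥ (2m)^{1/p}; more precisely, for every m there exist f ∈ ℓ_p with f ≠ 0 and a set A ⊆ ℕ with |A| ≤ m such that ‖S_A f‖_p ≥ (2m)^{1/p}·‖f‖_p, where S_A f := Σ_{n∈A} d_n*(f)·d_n. -/
open scoped BigOperators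

/-- The difference basis of `ℓ_p`: `d 0 = e 0` and `d n = e n - e (n-1)` for `n ≥ 1`
(indices starting at `0`). -/
noncomputable def diffBasis (n : ℕ) : ℕ → ℝ :=
  fun j => (if j = n then (1 : ℝ) else 0) - (if n ≠ 0 ∧ j = n - 1 then (1 : ℝ) else 0)

/-- The biorthogonal functionals of the difference basis: the tail sums
`d_n^*(f) = ∑_{j ≥ n} f j` (absolutely convergent since `ℓ_p ⊆ ℓ_1`). -/
noncomputable def diffCoef (n : ℕ) (f : ℕ → ℝ) : ℝ := ∑' k, f (n + k)

/-!
Each `d_n` with `n ≥ 1` has two entries, `1` at `n` and `-1` at `n - 1`. If no two elements of `A`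
are consecutive, these pairs of positions are disjoint, so `∑_{n ∈ A} d_n` has `2 |A|` entries
`±1` and `p`-norm `(2 |A|)^(1/p)`. This sum is the projection `S_A` of any unit vector `e_N` with
`N` at least every element of `A`, since all the tail sums of `e_N` from such `n` equal `1`.

The set `A` is written as `B + 1`: this excludes `0`, and the `-1` entries then sit on `B`, the
`1` entries on `B + 1`, so that `A` has no consecutive elements iff `B` is disjoint from `B + 1`.
-/

/-- The coordinate projection `S_A f = ∑_{n ∈ A} d_n^*(f) d_n` of the difference basis. -/
noncomputable def diffProj (A : Finset ℕ) (f : ℕ → ℝ) : ℕ → ℝ :=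
  fun j => ∑ n ∈ A, diffCoef n f * diffBasis n j

section PNorm

variable {p : ℝ} {f : ℕ → ℝ}

theorem memLpSeq_of_finite_support (hp : p ≠ 0) (hf : f.support.Finite) : MemLpSeq p f := by
  refine summable_of_ne_finset_zero (s := hf.toFinset) fun j hj => ?_
  have hfj : f j = 0 := by simpa using hj
  rw [hfj, abs_zero, Real.zero_rpow hp]

theorem pNorm_of_abs_eq_indicator (hp : p ≠ 0) {s : Finset ℕ}
    (hf : ∀ j, |f j| = if j ∈ s then 1 else 0) : pNorm p f = (s.card : ℝ) ^ (1 / p) := by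
  have habs : ∀ j, |f j| ^ p = if j ∈ s then 1 else 0 := fun j => by
    rw [hf, ite_pow, Real.one_rpow, Real.zero_rpow hp]
  have htsum : ∑' j, |f j| ^ p = s.card := by
    rw [tsum_congr habs, tsum_eq_sum fun j hj => if_neg hj, Finset.sum_boole,
      Finset.filter_mem_eq_inter, Finset.inter_self]
  rw [pNorm, htsum]

theorem pNorm_single_one (hp : p ≠ 0) (N : ℕ) : pNorm p (Pi.single N 1) = 1 := by
  have habs : ∀ j, |(Pi.single N 1 : ℕ → ℝ) j| = if j ∈ ({N} : Finset ℕ) then 1 else 0 :=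
    fun j => by simp [Pi.single_apply, apply_ite abs]
  simp [pNorm_of_abs_eq_indicator hp habs]

end PNorm

theorem diffCoef_single {n N : ℕ} (h : n ≤ N) (a : ℝ) : diffCoef n (Pi.single N a) = a := by
  obtain ⟨k, rfl⟩ := Nat.exists_eq_add_of_le h
  simp [diffCoef, Pi.single_apply]

theorem diffProj_single_one {A : Finset ℕ} {N : ℕ} (hA : ∀ n ∈ A, n ≤ N) (j : ℕ) :
    diffProj A (Pi.single N 1) j = ∑ n ∈ A, diffBasis n j :=
  Finset.sum_congr rfl fun n hn => by rw [diffCoef_single (hA n hn), one_mul]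

theorem diffBasis_succ (n j : ℕ) :
    diffBasis (n + 1) j = (if j = n + 1 then 1 else 0) - (if j = n then 1 else 0) := by
  simp [diffBasis]

theorem sum_diffBasis_map_succ (B : Finset ℕ) (j : ℕ) :
    ∑ n ∈ B.map (addRightEmbedding 1), diffBasis n j =
      (if j ∈ B.map (addRightEmbedding 1) then 1 else 0) - (if j ∈ B then 1 else 0) :=
  calc ∑ n ∈ B.map (addRightEmbedding 1), diffBasis n j
      = ∑ n ∈ B, ((if j = n + 1 then 1 else 0) - (if j = n then 1 else 0)) := by
        simp only [Finset.sum_map, addRightEmbedding_apply, diffBasis_succ]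
    _ = ∑ n ∈ B.map (addRightEmbedding 1), (if j = n then 1 else 0) -
          ∑ n ∈ B, (if j = n then 1 else 0) := by
        rw [Finset.sum_sub_distrib, Finset.sum_map]; rfl
    _ = (if j ∈ B.map (addRightEmbedding 1) then 1 else 0) - (if j ∈ B then 1 else 0) := by
        rw [Finset.sum_ite_eq, Finset.sum_ite_eq]

section Separated

variable {B : Finset ℕ}

theorem abs_sum_diffBasis_map_succ (hB : Disjoint B (B.map (addRightEmbedding 1))) (j : ℕ) :
    |∑ n ∈ B.map (addRightEmbedding 1), diffBasis n j| =
      if j ∈ B ∪ B.map (addRightEmbedding 1) then 1 else 0 := by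
  have hj : ¬(j ∈ B ∧ j ∈ B.map (addRightEmbedding 1)) :=
    fun h => Finset.disjoint_left.mp hB h.1 h.2
  simp only [sum_diffBasis_map_succ, Finset.mem_union]
  split_ifs <;> first | tauto | norm_num

theorem pNorm_diffProj_map_succ_single_one {p : ℝ} (hp : p ≠ 0) {N : ℕ}
    (hB : Disjoint B (B.map (addRightEmbedding 1))) (hN : ∀ n ∈ B, n < N) :
    pNorm p (diffProj (B.map (addRightEmbedding 1)) (Pi.single N 1)) =
      (2 * (B.card : ℝ)) ^ (1 / p) := by
  have hle : ∀ n ∈ B.map (addRightEmbedding 1), n ≤ N := by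
    simpa [Nat.succ_le_iff] using hN
  have habs : ∀ j, |diffProj (B.map (addRightEmbedding 1)) (Pi.single N 1) j| =
      if j ∈ B ∪ B.map (addRightEmbedding 1) then 1 else 0 := fun j => by
    rw [diffProj_single_one hle, abs_sum_diffBasis_map_succ hB]
  rw [pNorm_of_abs_eq_indicator hp habs, Finset.card_union_of_disjoint hB, Finset.card_map,
    Nat.cast_add, two_mul]

end Separated

theorem exists_card_eq_disjoint_map_succ (m : ℕ) :
    ∃ B : Finset ℕ, B.card = m ∧ Disjoint B (B.map (addRightEmbedding 1)) := by
  refine ⟨(Finset.range m).image (2 * ·), ?_, ?_⟩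
  · rw [Finset.card_image_of_injective _ (mul_right_injective₀ two_ne_zero), Finset.card_range]
  · simp only [Finset.disjoint_left, Finset.mem_map, Finset.mem_image, addRightEmbedding_apply]
    rintro _ ⟨i, -, rfl⟩ ⟨_, ⟨k, -, rfl⟩, h⟩
    omega

-- Finite support makes every tail sum `diffCoef n f` a finite one, also when `p > 1`, where `ℓ_p`
-- contains sequences on which the series diverges and `tsum` returns the junk value `0`.
theorem stmt9_general (p : ℝ) (hp : 0 < p) (m : ℕ) :
    ∃ (f : ℕ → ℝ) (A : Finset ℕ), f.support.Finite ∧ f ≠ 0 ∧ A.card ≤ m ∧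
      (2 * (m : ℝ)) ^ (1 / p) * pNorm p f ≤ pNorm p (diffProj A f) := by
  obtain ⟨B, hcard, hB⟩ := exists_card_eq_disjoint_map_succ m
  obtain ⟨N, hN⟩ : ∃ N, ∀ n ∈ B, n < N :=
    ⟨B.sup id + 1, fun n hn => Nat.lt_succ_of_le (Finset.le_sup (f := id) hn)⟩
  refine ⟨Pi.single N 1, B.map (addRightEmbedding 1), ?_, ?_, ?_, ?_⟩
  · exact (Set.finite_singleton N).subset Pi.support_single_subset
  · exact Pi.single_ne_zero_iff.mpr one_ne_zero
  · rw [Finset.card_map, hcard]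
  · rw [pNorm_single_one hp.ne', mul_one, pNorm_diffProj_map_succ_single_one hp.ne' hB hN, hcard]

/-- The difference basis of `ℓ_p`, `0<p≤1`, has `m`-th conditionality constant
at least `(2m)^(1/p)`: for every `m ≥ 1` there are `f ≠ 0` and `A` with
`|A| ≤ m` such that `‖S_A f‖_p ≥ (2m)^(1/p)·‖f‖_p`. -/
theorem stmt9 (p : ℝ) (hp0 : 0 < p) (hp1 : p ≤ 1) (m : ℕ) (hm : 1 ≤ m) :
    ∃ (f : ℕ → ℝ) (A : Finset ℕ), MemLpSeq p f ∧ f ≠ 0 ∧ A.card ≤ m ∧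
      (2 * (m : ℝ)) ^ (1 / p) * pNorm p f
        ≤ pNorm p (fun j => ∑ n ∈ A, diffCoef n f * diffBasis n j) := by
  obtain ⟨f, A, hf, hA⟩ := stmt9_general p hp0 m
  exact ⟨f, A, memLpSeq_of_finite_support hp0.ne' hf, hA⟩
end
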